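/- For every integer n ≥ 1 the quantized cluster variables q-commute: B[n,0,0,n−1]·B[n+1,0,0,n] = q² · B[n+1,0,0,n]·B[n,0,0,n−1]. -/

import Mathlib

noncomputable section

abbrev F : Type := RatFunc ℚ

/-- The deformation parameter `q`. -/
def qq : F := RatFunc.X

/-- The quantum integer `[3] = q² + 1 + q⁻²`. -/
def box3 : F := qq ^ 2 + 1 + (qq⁻¹) ^ 2

/-- The generators `E₁, E₂` of the free algebra. -/
def gen (i : Fin 2) : FreeAlgebra F (Fin 2) := FreeAlgebra.ι F i

/-- The quantized Serre relations. -/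
inductive SerreRel : FreeAlgebra F (Fin 2) → FreeAlgebra F (Fin 2) → Prop
  | rel1 : SerreRel
      (gen 0 ^ 3 * gen 1 - box3 • (gen 0 ^ 2 * gen 1 * gen 0)
        + box3 • (gen 0 * gen 1 * gen 0 ^ 2) - gen 1 * gen 0 ^ 3) 0
  | rel2 : SerreRel
      (gen 1 ^ 3 * gen 0 - box3 • (gen 1 ^ 2 * gen 0 * gen 1)
        + box3 • (gen 1 * gen 0 * gen 1 ^ 2) - gen 0 * gen 1 ^ 3) 0

/-- `U = U_q(𝔫)`, the free algebra on `E₁, E₂` modulo the quantized Serre relations. -/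
abbrev U : Type := RingQuot SerreRel

def E1 : U := RingQuot.mkAlgHom F SerreRel (gen 0)
def E2 : U := RingQuot.mkAlgHom F SerreRel (gen 1)

/-- `A = (1/(q+q⁻¹))(E₂E₁ − q⁻²E₁E₂)`. -/
def Aelt : U := (qq + qq⁻¹)⁻¹ • (E2 * E1 - (qq⁻¹) ^ 2 • (E1 * E2))

def v0 : U := E1
def v1 : U := Aelt * v0 - v0 * Aelt
def v2 : U := Aelt * v1 - v1 * Aelt
def v3 : U := Aelt * v2 - v2 * Aelt

/-- `uᵢ = (1 − q⁻²)⁻²ⁱ vᵢ`. -/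
def u0 : U := v0
def u1 : U := ((1 - (qq⁻¹) ^ 2)⁻¹) ^ 2 • v1
def u2 : U := ((1 - (qq⁻¹) ^ 2)⁻¹) ^ 4 • v2
def u3 : U := ((1 - (qq⁻¹) ^ 2)⁻¹) ^ 6 • v3

/-- `p₁ = u₃u₁ − q²u₂²`. -/
def p1 : U := u3 * u1 - qq ^ 2 • u2 ^ 2
/-- `p₀ = u₂u₀ − q²u₁²`. -/
def p0 : U := u2 * u0 - qq ^ 2 • u1 ^ 2

/-- `S`, the subalgebra of `U` generated by `u₀, u₁, u₂, u₃`. -/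
abbrev Sgen : Subalgebra F U := Algebra.adjoin F ({u0, u1, u2, u3} : Set U)

def us0 : Sgen := ⟨u0, Algebra.subset_adjoin (by simp)⟩
def us1 : Sgen := ⟨u1, Algebra.subset_adjoin (by simp)⟩
def us2 : Sgen := ⟨u2, Algebra.subset_adjoin (by simp)⟩
def us3 : Sgen := ⟨u3, Algebra.subset_adjoin (by simp)⟩

/-- `p₁ = u₃u₁ − q²u₂²` as an element of `S`. -/
def ps1 : Sgen := us3 * us1 - qq ^ 2 • us2 ^ 2
/-- `p₀ = u₂u₀ − q²u₁²` as an element of `S`. -/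
def ps0 : Sgen := us2 * us0 - qq ^ 2 • us1 ^ 2

/-- Index quadruples `a = (a₃, a₂, a₁, a₀)`. -/
abbrev Idx : Type := ℕ × ℕ × ℕ × ℕ

/-- The PBW monomial `u₃^{a₃}u₂^{a₂}u₁^{a₁}u₀^{a₀}`. -/
def mon (a : Idx) : Sgen := us3 ^ a.1 * us2 ^ a.2.1 * us1 ^ a.2.2.1 * us0 ^ a.2.2.2

/-- `b(a) = C(a₃,2)+C(a₂,2)+C(a₁,2)+C(a₀,2)`. -/
def bexp (a : Idx) : ℕ :=
  Nat.choose a.1 2 + Nat.choose a.2.1 2 + Nat.choose a.2.2.1 2 + Nat.choose a.2.2.2 2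

/-- The dual PBW basis element `E[a] = q^{b(a)} u₃^{a₃}u₂^{a₂}u₁^{a₁}u₀^{a₀}`. -/
def Ee (a : Idx) : Sgen := qq ^ bexp a • mon a

/-- `N(a) = (a₃+a₂+a₁+a₀)² − 7a₃ − 5a₂ − 3a₁ − a₀`. -/
def Nnum (a : Idx) : ℤ :=
  ((a.1 : ℤ) + a.2.1 + a.2.2.1 + a.2.2.2) ^ 2
    - 7 * a.1 - 5 * a.2.1 - 3 * a.2.2.1 - a.2.2.2

/-- `a ⊴ b` iff `b − a ∈ ℕ·(−1,2,−1,0) + ℕ·(0,−1,2,−1)`. -/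
def tri (a b : Idx) : Prop :=
  ∃ s r : ℕ,
    (b.1 : ℤ) = a.1 - s ∧
    (b.2.1 : ℤ) = a.2.1 + 2 * s - r ∧
    (b.2.2.1 : ℤ) = a.2.2.1 - s + 2 * r ∧
    (b.2.2.2 : ℤ) = a.2.2.2 - r

/-- `S(a) = {b ∈ ℕ⁴ : a ⊴ b and a ≠ b}`. -/
def Sset (a : Idx) : Set Idx := {b | tri a b ∧ a ≠ b}

/-- Condition (i): `B[a] − E[a] ∈ Σ_{b ∈ S(a)} qℤ[q]·E[b]`. -/
def cond1 (B : Idx → Sgen) (a : Idx) : Prop :=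
  ∃ φ : Idx →₀ Polynomial ℤ,
    (↑φ.support : Set Idx) ⊆ Sset a ∧
    B a - Ee a =
      φ.sum fun b p => (qq * Polynomial.eval₂ (Int.castRingHom F) qq p) • Ee b

/-- Hypotheses on the bar involution of coefficients `bar : q ↦ q⁻¹` and on the
anti-automorphism `σ` of `S`: `σ` is an additive, anti-multiplicative bijection with
`σ(c(q)·x) = c(q⁻¹)·σ(x)` and `σ(uᵢ) = q^{2i}uᵢ`. -/
def SigmaHyp (bar : F →+* F) (σ : Sgen → Sgen) : Prop :=
  bar qq = qq⁻¹ ∧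
  Function.Bijective σ ∧
  (∀ x y : Sgen, σ (x + y) = σ x + σ y) ∧
  (∀ x y : Sgen, σ (x * y) = σ y * σ x) ∧
  (∀ (c : F) (x : Sgen), σ (c • x) = bar c • σ x) ∧
  σ us0 = us0 ∧ σ us1 = qq ^ 2 • us1 ∧ σ us2 = qq ^ 4 • us2 ∧ σ us3 = qq ^ 6 • us3

/-- The defining properties of the dual canonical basis `B`: for every `a ∈ ℕ⁴`,
`B[a] − E[a] ∈ Σ_{b ∈ S(a)} qℤ[q]·E[b]` and `σ(B[a]) = q^{−N(a)}B[a]`. -/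
def DCB (bar : F →+* F) (σ : Sgen → Sgen) (B : Idx → Sgen) : Prop :=
  ∀ a : Idx, cond1 B a ∧ σ (B a) = qq ^ (-Nnum a) • B a

/-- Extension of `B` to integer quadruples by the convention that `B[a] = 0` whenever
some coordinate of `a` is negative. -/
def Bz (B : Idx → Sgen) (a : ℤ × ℤ × ℤ × ℤ) : Sgen :=
  if 0 ≤ a.1 ∧ 0 ≤ a.2.1 ∧ 0 ≤ a.2.2.1 ∧ 0 ≤ a.2.2.2 then
    B (a.1.toNat, a.2.1.toNat, a.2.2.1.toNat, a.2.2.2.toNat)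
  else 0

set_option linter.all false
set_option linter.unusedSimpArgs false
section AbstractAlg

/-- Straightening relations. -/
structure QRel {K R : Type*} [Field K] [Ring R] [Algebra K R] (q : K) (a0 a1 a2 a3 : R) : Prop where
  hq : q ≠ 0
  h01 : a0 * a1 = (q⁻¹) ^ 2 • (a1 * a0)
  h12 : a1 * a2 = (q⁻¹) ^ 2 • (a2 * a1)
  h23 : a2 * a3 = (q⁻¹) ^ 2 • (a3 * a2)
  h02 : a0 * a2 = (q⁻¹) ^ 2 • (a2 * a0) + ((q⁻¹) ^ 2 - 1) • (a1 * a1)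
  h13 : a1 * a3 = (q⁻¹) ^ 2 • (a3 * a1) + ((q⁻¹) ^ 2 - 1) • (a2 * a2)
  h03 : a0 * a3 = (q⁻¹) ^ 2 • (a3 * a0) + ((q⁻¹) ^ 4 - 1) • (a2 * a1)

variable {K R : Type*} [Field K] [Ring R] [Algebra K R] {q : K} {a0 a1 a2 a3 : R}

namespace QRel

theorem x01 (h : QRel q a0 a1 a2 a3) (x : R) : a0 * (a1 * x) = (q⁻¹) ^ 2 • (a1 * (a0 * x)) := by
  rw [← mul_assoc, h.h01]; simp [mul_assoc]
theorem x12 (h : QRel q a0 a1 a2 a3) (x : R) : a1 * (a2 * x) = (q⁻¹) ^ 2 • (a2 * (a1 * x)) := by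
  rw [← mul_assoc, h.h12]; simp [mul_assoc]
theorem x23 (h : QRel q a0 a1 a2 a3) (x : R) : a2 * (a3 * x) = (q⁻¹) ^ 2 • (a3 * (a2 * x)) := by
  rw [← mul_assoc, h.h23]; simp [mul_assoc]
theorem x02 (h : QRel q a0 a1 a2 a3) (x : R) : a0 * (a2 * x) =
    (q⁻¹) ^ 2 • (a2 * (a0 * x)) + ((q⁻¹) ^ 2 - 1) • (a1 * (a1 * x)) := by
  rw [← mul_assoc, h.h02]; simp [mul_assoc, add_mul]
theorem x13 (h : QRel q a0 a1 a2 a3) (x : R) : a1 * (a3 * x) =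
    (q⁻¹) ^ 2 • (a3 * (a1 * x)) + ((q⁻¹) ^ 2 - 1) • (a2 * (a2 * x)) := by
  rw [← mul_assoc, h.h13]; simp [mul_assoc, add_mul]
theorem x03 (h : QRel q a0 a1 a2 a3) (x : R) : a0 * (a3 * x) =
    (q⁻¹) ^ 2 • (a3 * (a0 * x)) + ((q⁻¹) ^ 4 - 1) • (a2 * (a1 * x)) := by
  rw [← mul_assoc, h.h03]; simp [mul_assoc, add_mul]

end QRel

/-- p1 -/
def P1 (q : K) (a1 a2 a3 : R) : R := a3 * a1 - q ^ 2 • (a2 * a2)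
/-- p0 -/
def P0 (q : K) (a0 a1 a2 : R) : R := a2 * a0 - q ^ 2 • (a1 * a1)
/-- z -/
def ZZ (q : K) (a0 a1 a2 a3 : R) : R := a3 * a0 - q ^ 2 • (a2 * a1)

namespace QRel

theorem p1u3 (h : QRel q a0 a1 a2 a3) : P1 q a1 a2 a3 * a3 = (q⁻¹) ^ 2 • (a3 * P1 q a1 a2 a3) := by
  have hq := h.hq
  simp only [P0, P1, ZZ, mul_add, add_mul, mul_sub, sub_mul, smul_mul_assoc, mul_smul_comm,
    smul_smul, smul_add, smul_sub, mul_assoc, h.h01, h.h12, h.h23, h.h02, h.h13, h.h03,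
    h.x01, h.x12, h.x23, h.x02, h.x13, h.x03]
  try (match_scalars <;> field_simp <;> ring)
theorem p1u2 (h : QRel q a0 a1 a2 a3) : P1 q a1 a2 a3 * a2 = a2 * P1 q a1 a2 a3 := by
  have hq := h.hq
  simp only [P0, P1, ZZ, mul_add, add_mul, mul_sub, sub_mul, smul_mul_assoc, mul_smul_comm,
    smul_smul, smul_add, smul_sub, mul_assoc, h.h01, h.h12, h.h23, h.h02, h.h13, h.h03,
    h.x01, h.x12, h.x23, h.x02, h.x13, h.x03]
  try (match_scalars <;> field_simp <;> ring)
theorem p1u1 (h : QRel q a0 a1 a2 a3) : P1 q a1 a2 a3 * a1 = q ^ 2 • (a1 * P1 q a1 a2 a3) := by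
  have hq := h.hq
  simp only [P0, P1, ZZ, mul_add, add_mul, mul_sub, sub_mul, smul_mul_assoc, mul_smul_comm,
    smul_smul, smul_add, smul_sub, mul_assoc, h.h01, h.h12, h.h23, h.h02, h.h13, h.h03,
    h.x01, h.x12, h.x23, h.x02, h.x13, h.x03]
  try (match_scalars <;> field_simp <;> ring)
theorem p1u0 (h : QRel q a0 a1 a2 a3) : P1 q a1 a2 a3 * a0 = q ^ 4 • (a0 * P1 q a1 a2 a3) := by
  have hq := h.hq
  simp only [P0, P1, ZZ, mul_add, add_mul, mul_sub, sub_mul, smul_mul_assoc, mul_smul_comm,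
    smul_smul, smul_add, smul_sub, mul_assoc, h.h01, h.h12, h.h23, h.h02, h.h13, h.h03,
    h.x01, h.x12, h.x23, h.x02, h.x13, h.x03]
  try (match_scalars <;> field_simp <;> ring)
theorem p0u3 (h : QRel q a0 a1 a2 a3) : P0 q a0 a1 a2 * a3 = (q⁻¹) ^ 4 • (a3 * P0 q a0 a1 a2) := by
  have hq := h.hq
  simp only [P0, P1, ZZ, mul_add, add_mul, mul_sub, sub_mul, smul_mul_assoc, mul_smul_comm,
    smul_smul, smul_add, smul_sub, mul_assoc, h.h01, h.h12, h.h23, h.h02, h.h13, h.h03,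
    h.x01, h.x12, h.x23, h.x02, h.x13, h.x03]
  try (match_scalars <;> field_simp <;> ring)
theorem p0u2 (h : QRel q a0 a1 a2 a3) : P0 q a0 a1 a2 * a2 = (q⁻¹) ^ 2 • (a2 * P0 q a0 a1 a2) := by
  have hq := h.hq
  simp only [P0, P1, ZZ, mul_add, add_mul, mul_sub, sub_mul, smul_mul_assoc, mul_smul_comm,
    smul_smul, smul_add, smul_sub, mul_assoc, h.h01, h.h12, h.h23, h.h02, h.h13, h.h03,
    h.x01, h.x12, h.x23, h.x02, h.x13, h.x03]
  try (match_scalars <;> field_simp <;> ring)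
theorem p0u1 (h : QRel q a0 a1 a2 a3) : P0 q a0 a1 a2 * a1 = a1 * P0 q a0 a1 a2 := by
  have hq := h.hq
  simp only [P0, P1, ZZ, mul_add, add_mul, mul_sub, sub_mul, smul_mul_assoc, mul_smul_comm,
    smul_smul, smul_add, smul_sub, mul_assoc, h.h01, h.h12, h.h23, h.h02, h.h13, h.h03,
    h.x01, h.x12, h.x23, h.x02, h.x13, h.x03]
  try (match_scalars <;> field_simp <;> ring)
theorem p0u0 (h : QRel q a0 a1 a2 a3) : P0 q a0 a1 a2 * a0 = q ^ 2 • (a0 * P0 q a0 a1 a2) := by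
  have hq := h.hq
  simp only [P0, P1, ZZ, mul_add, add_mul, mul_sub, sub_mul, smul_mul_assoc, mul_smul_comm,
    smul_smul, smul_add, smul_sub, mul_assoc, h.h01, h.h12, h.h23, h.h02, h.h13, h.h03,
    h.x01, h.x12, h.x23, h.x02, h.x13, h.x03]
  try (match_scalars <;> field_simp <;> ring)
theorem zu3 (h : QRel q a0 a1 a2 a3) : ZZ q a0 a1 a2 a3 * a3 =
    (q⁻¹) ^ 2 • (a3 * ZZ q a0 a1 a2 a3) + ((q⁻¹) ^ 2 - 1) • (P1 q a1 a2 a3 * a2) := by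
  have hq := h.hq
  simp only [P0, P1, ZZ, mul_add, add_mul, mul_sub, sub_mul, smul_mul_assoc, mul_smul_comm,
    smul_smul, smul_add, smul_sub, mul_assoc, h.h01, h.h12, h.h23, h.h02, h.h13, h.h03,
    h.x01, h.x12, h.x23, h.x02, h.x13, h.x03]
  try (match_scalars <;> field_simp <;> ring)
theorem zu2 (h : QRel q a0 a1 a2 a3) : ZZ q a0 a1 a2 a3 * a2 =
    (q⁻¹) ^ 2 • (a2 * ZZ q a0 a1 a2 a3) + (q ^ 2 - 1) • (P0 q a0 a1 a2 * a3) := by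
  have hq := h.hq
  simp only [P0, P1, ZZ, mul_add, add_mul, mul_sub, sub_mul, smul_mul_assoc, mul_smul_comm,
    smul_smul, smul_add, smul_sub, mul_assoc, h.h01, h.h12, h.h23, h.h02, h.h13, h.h03,
    h.x01, h.x12, h.x23, h.x02, h.x13, h.x03]
  try (match_scalars <;> field_simp <;> ring)
theorem base0 (h : QRel q a0 a1 a2 a3) :
    q ^ 2 • (ZZ q a0 a1 a2 a3 * ZZ q a0 a1 a2 a3 - q ^ 2 • (P0 q a0 a1 a2 * P1 q a1 a2 a3)) =
    (a3 * ZZ q a0 a1 a2 a3 - q ^ 2 • (P1 q a1 a2 a3 * a2)) * a0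
      - q ^ 2 • (a3 * (a1 * P0 q a0 a1 a2)) := by
  have hq := h.hq
  simp only [P0, P1, ZZ, mul_add, add_mul, mul_sub, sub_mul, smul_mul_assoc, mul_smul_comm,
    smul_smul, smul_add, smul_sub, mul_assoc, h.h01, h.h12, h.h23, h.h02, h.h13, h.h03,
    h.x01, h.x12, h.x23, h.x02, h.x13, h.x03]
  try (match_scalars <;> field_simp <;> ring)
theorem p1p0 (h : QRel q a0 a1 a2 a3) :
    P1 q a1 a2 a3 * P0 q a0 a1 a2 = q ^ 4 • (P0 q a0 a1 a2 * P1 q a1 a2 a3) := by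
  have hq := h.hq
  simp only [P0, P1, ZZ, mul_add, add_mul, mul_sub, sub_mul, smul_mul_assoc, mul_smul_comm,
    smul_smul, smul_add, smul_sub, mul_assoc, h.h01, h.h12, h.h23, h.h02, h.h13, h.h03,
    h.x01, h.x12, h.x23, h.x02, h.x13, h.x03]
  try (match_scalars <;> field_simp <;> ring)
theorem p1z (h : QRel q a0 a1 a2 a3) :
    P1 q a1 a2 a3 * ZZ q a0 a1 a2 a3 = q ^ 2 • (ZZ q a0 a1 a2 a3 * P1 q a1 a2 a3) := by
  have hq := h.hq
  simp only [P0, P1, ZZ, mul_add, add_mul, mul_sub, sub_mul, smul_mul_assoc, mul_smul_comm,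
    smul_smul, smul_add, smul_sub, mul_assoc, h.h01, h.h12, h.h23, h.h02, h.h13, h.h03,
    h.x01, h.x12, h.x23, h.x02, h.x13, h.x03]
  try (match_scalars <;> field_simp <;> ring)
theorem p0z (h : QRel q a0 a1 a2 a3) :
    P0 q a0 a1 a2 * ZZ q a0 a1 a2 a3 = (q⁻¹) ^ 2 • (ZZ q a0 a1 a2 a3 * P0 q a0 a1 a2) := by
  have hq := h.hq
  simp only [P0, P1, ZZ, mul_add, add_mul, mul_sub, sub_mul, smul_mul_assoc, mul_smul_comm,
    smul_smul, smul_add, smul_sub, mul_assoc, h.h01, h.h12, h.h23, h.h02, h.h13, h.h03,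
    h.x01, h.x12, h.x23, h.x02, h.x13, h.x03]
  try (match_scalars <;> field_simp <;> ring)
end QRel

/-- Chebyshev-type sequence. -/
def VV (q : K) (z p : R) : ℕ → R
  | 0 => 0
  | 1 => 1
  | n + 2 => z * VV q z p (n + 1) - q ^ 2 • (p * VV q z p n)

/-- Cluster variables, unnormalised. -/
def TT (q : K) (z p a3 y : R) (n : ℕ) : R :=
  a3 * VV q z p (n + 1) - q ^ 2 • (y * VV q z p n)

theorem VV_comm (q : K) (z p x : R) (hz : x * z = z * x) (hp : x * p = p * x) (n : ℕ) :
    x * VV q z p n = VV q z p n * x := by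
  induction n using Nat.twoStepInduction with
  | zero => simp [VV]
  | one => simp [VV]
  | more n ih1 ih2 =>
    simp only [VV, mul_sub, sub_mul, mul_smul_comm, smul_mul_assoc]
    rw [← mul_assoc, hz, mul_assoc, ih2, ← mul_assoc x p, hp, mul_assoc, ih1]
    simp only [mul_assoc]

theorem VV_right (q : K) (z p : R) (hp : z * p = p * z) (n : ℕ) :
    VV q z p (n + 2) = VV q z p (n + 1) * z - q ^ 2 • (VV q z p n * p) := by
  rw [VV, VV_comm q z p z rfl hp, VV_comm q z p p hp.symm rfl]

theorem TT_right (q : K) (z p a3 y : R) (hp : z * p = p * z) (n : ℕ) :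
    TT q z p a3 y (n + 2) = TT q z p a3 y (n + 1) * z - q ^ 2 • (TT q z p a3 y n * p) := by
  simp only [TT, VV_right q z p hp (n + 1), VV_right q z p hp n, mul_sub, sub_mul, mul_smul_comm,
    smul_mul_assoc, mul_assoc, smul_sub]
  module

theorem TT_zero (q : K) (z p a3 y : R) : TT q z p a3 y 0 = a3 := by simp [TT, VV]
theorem TT_one (q : K) (z p a3 y : R) : TT q z p a3 y 1 = a3 * z - q ^ 2 • y := by
  simp [TT, VV]

/-- Relations needed for the second layer. -/
structure QRel2 (q : K) (z p a3 y : R) : Prop where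
  hq : q ≠ 0
  zp : z * p = p * z
  za : z * a3 = (q⁻¹) ^ 2 • (a3 * z) + ((q⁻¹) ^ 2 - 1) • y
  zy : z * y = (q⁻¹) ^ 4 • (y * z) + (q⁻¹ ^ 2 - q⁻¹ ^ 4) • (a3 * p)
  pa : p * a3 = (q⁻¹) ^ 6 • (a3 * p)
  py : p * y = (q⁻¹) ^ 6 • (y * p)
  ay : a3 * y = q ^ 4 • (y * a3)

namespace QRel2
variable {z p y : R}

theorem left0 (h : QRel2 q z p a3 y) : TT q z p a3 y 1 = q ^ 2 • (z * a3) - y := by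
  have hq := h.hq
  rw [TT_one, h.za]
  match_scalars <;> field_simp <;> ring

theorem left1 (h : QRel2 q z p a3 y) : TT q z p a3 y (0 + 2) =
    q ^ 2 • (z * TT q z p a3 y (0 + 1)) - TT q z p a3 y 0 * p := by
  have hq := h.hq
  have R := TT_right q z p a3 y h.zp
  have za' : ∀ x, z * (a3 * x) = (q⁻¹) ^ 2 • (a3 * (z * x)) + ((q⁻¹) ^ 2 - 1) • (y * x) := by
      intro x; rw [← mul_assoc, h.za]; simp [add_mul, mul_assoc]
  rw [R]
  simp only [TT_one, TT_zero, mul_sub, sub_mul, mul_smul_comm, smul_mul_assoc, mul_assoc,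
      smul_sub, smul_add, smul_smul, h.zy, za', zero_add]
  match_scalars <;> field_simp <;> ring

theorem left_ (h : QRel2 q z p a3 y) (n : ℕ) : TT q z p a3 y (n + 2) =
    q ^ 2 • (z * TT q z p a3 y (n + 1)) - TT q z p a3 y n * p := by
  have hq := h.hq
  have R := TT_right q z p a3 y h.zp
  induction n using Nat.twoStepInduction with
  | zero =>
    exact h.left1
  | one =>
    have e2 := R 0
    have l0 := h.left0
    have hz : q ^ 2 • (z * a3) = TT q z p a3 y 1 + y := by rw [l0]; abel
    have hz1 : q ^ 2 • (z * TT q z p a3 y 1) = TT q z p a3 y 2 + a3 * p := by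
      have : TT q z p a3 y (0 + 2) = q ^ 2 • (z * TT q z p a3 y (0 + 1)) -
        TT q z p a3 y 0 * p := h.left1
      rw [TT_zero] at this
      simp only [zero_add] at this
      rw [this]; abel
    have : q ^ 2 • (z * TT q z p a3 y 2) = TT q z p a3 y 3 + TT q z p a3 y 1 * p := by
      calc q ^ 2 • (z * TT q z p a3 y 2)
          = (q ^ 2 • (z * TT q z p a3 y 1)) * z - q ^ 2 • ((q ^ 2 • (z * a3)) * p) := by
            rw [show (2:ℕ) = 0 + 2 from rfl, R 0, TT_zero]
            simp only [zero_add, mul_sub, mul_smul_comm, smul_mul_assoc, mul_assoc, smul_sub]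
        _ = _ := by
            rw [hz, hz1, show (3:ℕ) = 1 + 2 from rfl, R 1, add_mul, add_mul, mul_assoc a3,
              ← h.zp, TT_one, sub_mul]
            simp only [sub_mul, mul_assoc, smul_mul_assoc, smul_add, one_add_one_eq_two]
            abel
    rw [this]; abel
  | more n ih1 ih2 =>
    have e1 : q ^ 2 • (z * TT q z p a3 y (n + 1)) = TT q z p a3 y (n + 2) + TT q z p a3 y n * p := by
      rw [ih1]; abel
    have e2 : q ^ 2 • (z * TT q z p a3 y (n + 2)) =
        TT q z p a3 y (n + 3) + TT q z p a3 y (n + 1) * p := by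
      rw [ih2]; abel
    have : q ^ 2 • (z * TT q z p a3 y (n + 3)) =
        TT q z p a3 y (n + 4) + TT q z p a3 y (n + 2) * p := by
      calc q ^ 2 • (z * TT q z p a3 y (n + 3))
          = (q ^ 2 • (z * TT q z p a3 y (n + 2))) * z
            - q ^ 2 • ((q ^ 2 • (z * TT q z p a3 y (n + 1))) * p) := by
            rw [R (n + 1)]
            simp only [mul_sub, mul_smul_comm, smul_mul_assoc, mul_assoc, smul_sub]
        _ = _ := by
            rw [e1, e2, R (n + 2), add_mul, add_mul, mul_assoc _ p z, ← h.zp]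
            nth_rewrite 3 [R n]
            simp only [sub_mul, mul_assoc, smul_mul_assoc, smul_add]
            abel
    rw [this]; abel

theorem pT (h : QRel2 q z p a3 y) (n : ℕ) :
    p * TT q z p a3 y n = (q⁻¹) ^ 6 • (TT q z p a3 y n * p) := by
  have hv := VV_comm q z p p h.zp.symm rfl
  simp only [TT, mul_sub, sub_mul, mul_smul_comm, smul_mul_assoc]
  rw [← mul_assoc p, h.pa, ← mul_assoc p, h.py]
  simp only [smul_mul_assoc, mul_assoc, hv, smul_sub]
  module

theorem comm (h : QRel2 q z p a3 y) (n : ℕ) :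
    TT q z p a3 y n * TT q z p a3 y (n + 1) = q ^ 2 • (TT q z p a3 y (n + 1) * TT q z p a3 y n) := by
  have hq := h.hq
  induction n with
  | zero =>
    simp only [zero_add]
    nth_rewrite 1 [h.left0]
    rw [TT_one, TT_zero]
    simp only [mul_sub, sub_mul, mul_smul_comm, smul_mul_assoc, mul_assoc, smul_sub, h.ay]
    module
  | succ n ih =>
    nth_rewrite 1 [h.left_ n]
    rw [TT_right q z p a3 y h.zp n]
    simp only [mul_sub, sub_mul, mul_smul_comm, smul_mul_assoc, mul_assoc, smul_sub, h.pT]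
    rw [← mul_assoc (TT q z p a3 y n), ih, ← mul_assoc (TT q z p a3 y (n + 1)) _ p]
    simp only [smul_mul_assoc]
    match_scalars <;> field_simp
end QRel2

theorem QRel.p0a3 (h : QRel q a0 a1 a2 a3) (x : R) :
    P0 q a0 a1 a2 * (a3 * x) = (q⁻¹) ^ 4 • (a3 * (P0 q a0 a1 a2 * x)) := by
  rw [← mul_assoc, h.p0u3]; simp [mul_assoc]
theorem QRel.p0a2 (h : QRel q a0 a1 a2 a3) (x : R) :
    P0 q a0 a1 a2 * (a2 * x) = (q⁻¹) ^ 2 • (a2 * (P0 q a0 a1 a2 * x)) := by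
  rw [← mul_assoc, h.p0u2]; simp [mul_assoc]
theorem QRel.p1a3 (h : QRel q a0 a1 a2 a3) (x : R) :
    P1 q a1 a2 a3 * (a3 * x) = (q⁻¹) ^ 2 • (a3 * (P1 q a1 a2 a3 * x)) := by
  rw [← mul_assoc, h.p1u3]; simp [mul_assoc]
theorem QRel.p1a2 (h : QRel q a0 a1 a2 a3) (x : R) :
    P1 q a1 a2 a3 * (a2 * x) = a2 * (P1 q a1 a2 a3 * x) := by
  rw [← mul_assoc, h.p1u2]; simp [mul_assoc]
theorem QRel.p1z' (h : QRel q a0 a1 a2 a3) (x : R) :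
    P1 q a1 a2 a3 * (ZZ q a0 a1 a2 a3 * x) = q ^ 2 • (ZZ q a0 a1 a2 a3 * (P1 q a1 a2 a3 * x)) := by
  rw [← mul_assoc, h.p1z]; simp [mul_assoc]
theorem QRel.p0z' (h : QRel q a0 a1 a2 a3) (x : R) :
    P0 q a0 a1 a2 * (ZZ q a0 a1 a2 a3 * x) =
      (q⁻¹) ^ 2 • (ZZ q a0 a1 a2 a3 * (P0 q a0 a1 a2 * x)) := by
  rw [← mul_assoc, h.p0z]; simp [mul_assoc]
theorem QRel.p1p0' (h : QRel q a0 a1 a2 a3) (x : R) :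
    P1 q a1 a2 a3 * (P0 q a0 a1 a2 * x) = q ^ 4 • (P0 q a0 a1 a2 * (P1 q a1 a2 a3 * x)) := by
  rw [← mul_assoc, h.p1p0]; simp [mul_assoc]

theorem QRel.rel2 (h : QRel q a0 a1 a2 a3) :
    QRel2 q (ZZ q a0 a1 a2 a3) (P0 q a0 a1 a2 * P1 q a1 a2 a3) a3 (P1 q a1 a2 a3 * a2) where
  hq := h.hq
  zp := by
    have hq := h.hq
    simp only [mul_assoc, h.p1z, mul_smul_comm, h.p0z', smul_smul]
    match_scalars; field_simp
  za := h.zu3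
  zy := by
    have hq := h.hq
    have e : ZZ q a0 a1 a2 a3 * P1 q a1 a2 a3 = (q⁻¹)^2 • (P1 q a1 a2 a3 * ZZ q a0 a1 a2 a3) := by
      rw [h.p1z]; match_scalars; field_simp
    rw [← mul_assoc, e, smul_mul_assoc, mul_assoc, h.zu2]
    simp only [mul_add, mul_smul_comm, mul_assoc, h.p0u3, h.p1a3, h.p1p0, smul_add, smul_smul]
    match_scalars <;> field_simp
  pa := by
    have hq := h.hq
    simp only [mul_assoc, h.p1u3, h.p0a3, mul_smul_comm, smul_smul]
    match_scalars; field_simp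
  py := by
    have hq := h.hq
    simp only [mul_assoc, h.p1u2, h.p0a2, mul_smul_comm, smul_smul, h.p1p0', h.p1a2]
    match_scalars; field_simp
  ay := by
    have hq := h.hq
    simp only [mul_assoc, h.h23, h.p1a3, mul_smul_comm, smul_smul]
    match_scalars; field_simp

theorem QRel.VT (h : QRel q a0 a1 a2 a3) {z p y : R} (hz : z = ZZ q a0 a1 a2 a3)
    (hp : p = P0 q a0 a1 a2 * P1 q a1 a2 a3) (hy : y = P1 q a1 a2 a3 * a2) (n : ℕ) :
    q ^ (2 * n + 2) • VV q z p (n + 3) = TT q z p a3 y (n + 1) * a0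
      - q ^ 2 • (TT q z p a3 y n * (a1 * P0 q a0 a1 a2)) := by
  have h2 : QRel2 q z p a3 y := by subst hz hp hy; exact h.rel2
  have hq := h.hq
  have L : ∀ n, TT q z p a3 y (n + 2) =
    q ^ 2 • (z * TT q z p a3 y (n + 1)) - q ^ 6 • (p * TT q z p a3 y n) := by
    intro n
    rw [h2.left_ n, h2.pT]
    match_scalars <;> field_simp
  induction n using Nat.twoStepInduction with
  | zero =>
    have := h.base0
    rw [zero_add, TT_one, TT_zero, hy, hz]
    simp only [VV, ← hp, mul_one, mul_zero, smul_zero, sub_zero, mul_zero, zero_add]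
    rw [hp]
    exact this
  | one =>
    have b0 : q ^ 2 • VV q z p 3 = TT q z p a3 y 1 * a0 - q ^ 2 • (a3 * (a1 * P0 q a0 a1 a2)) := by
      have := h.base0
      rw [TT_one, hy, hz]
      simp only [VV, ← hp, mul_one, mul_zero, smul_zero, sub_zero, mul_zero, zero_add]
      rw [hp]
      exact this
    have e : y * (a1 * P0 q a0 a1 a2) = q ^ 6 • (p * (a2 * a1)) := by
      rw [hy, hp, ← h.p0u1]
      have : a2 * (P0 q a0 a1 a2 * a1) = q ^ 2 • (P0 q a0 a1 a2 * (a2 * a1)) := by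
        rw [h.p0a2]; match_scalars; field_simp
      rw [mul_assoc, this, mul_smul_comm, h.p1p0', smul_smul, mul_assoc]
      match_scalars; ring
    have t1 : TT q z p a3 y 1 * (a1 * P0 q a0 a1 a2) =
        q ^ 2 • (z * (a3 * (a1 * P0 q a0 a1 a2))) - q ^ 6 • (p * (a2 * a1)) := by
      rw [← e, h2.left0]; simp only [sub_mul, smul_mul_assoc, mul_assoc]
    have pz : p * z = p * (a3 * a0) - q ^ 2 • (p * (a2 * a1)) := by
      rw [hz]; simp only [ZZ, mul_sub, mul_smul_comm]
    have v4 : VV q z p 4 = z * VV q z p 3 - q ^ 2 • (p * (a3 * a0) - q ^ 2 • (p * (a2 * a1))) := by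
      rw [← pz]; simp [VV]
    show q ^ 4 • VV q z p 4 = TT q z p a3 y (0 + 2) * a0 - _
    rw [L 0, TT_zero, v4, t1, smul_sub, show q ^ 4 = q ^ 2 * q ^ 2 by ring, mul_smul,
      ← mul_smul_comm (q ^ 2) z, b0]
    simp only [mul_sub, sub_mul, smul_sub, mul_smul_comm, smul_mul_assoc, mul_assoc, smul_smul,
      zero_add]
    module
  | more n ih1 ih2 =>
    show q ^ (2 * n + 6) • VV q z p (n + 3 + 2) = TT q z p a3 y (n + 1 + 2) * a0 - _
    have e1 : q ^ (2 * n + 6) • VV q z p (n + 3 + 2)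
      = q ^ 2 • (z * (q ^ (2 * (n+1) + 2) • VV q z p (n + 1 + 3)))
        - q ^ 6 • (p * (q ^ (2 * n + 2) • VV q z p (n + 3))) := by
      rw [VV]
      simp only [mul_smul_comm, smul_sub, smul_smul]
      module
    rw [e1, ih1, ih2, L (n + 1), L n]
    simp only [mul_sub, sub_mul, smul_sub, mul_smul_comm, smul_mul_assoc, mul_assoc, smul_smul]
    module
end AbstractAlg

section AbstractLat
variable {K R : Type*} [Field K] [Ring R] [Algebra K R] {q : K} {a0 a1 a2 a3 : R}

/-- Normalised PBW monomials. -/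
def EE (q : K) (a0 a1 a2 a3 : R) (b : Idx) : R :=
  q ^ bexp b • (a3 ^ b.1 * a2 ^ b.2.1 * a1 ^ b.2.2.1 * a0 ^ b.2.2.2)

theorem qc_pow_right {c : K} {x y : R} (h : x * y = c • (y * x)) (k : ℕ) :
    x * y ^ k = c ^ k • (y ^ k * x) := by
  induction k with
  | zero => simp
  | succ k ih =>
    rw [pow_succ, ← mul_assoc, ih, smul_mul_assoc, mul_assoc, h, mul_smul_comm, smul_smul,
      mul_assoc, pow_succ]

theorem qc_pow_left {c : K} {x y : R} (h : x * y = c • (y * x)) (k : ℕ) :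
    x ^ k * y = c ^ k • (y * x ^ k) := by
  induction k with
  | zero => simp
  | succ k ih =>
    rw [pow_succ', mul_assoc, ih, mul_smul_comm, ← mul_assoc, h, smul_mul_assoc, smul_smul,
      mul_assoc, pow_succ]

theorem choose2 (n : ℕ) : Nat.choose (n + 1) 2 = n + Nat.choose n 2 := by
  rw [Nat.choose_succ_succ' n 1, Nat.choose_one_right]

theorem EE_a3 (i j k l : ℕ) : EE q a0 a1 a2 a3 (i + 1, j, k, l) =
    q ^ i • (a3 * EE q a0 a1 a2 a3 (i, j, k, l)) := by
  simp only [EE, bexp, choose2, mul_smul_comm, smul_smul, pow_succ' a3, mul_assoc]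
  congr 1; ring

theorem EE_a0 (i j k l : ℕ) : EE q a0 a1 a2 a3 (i, j, k, l + 1) =
    q ^ l • (EE q a0 a1 a2 a3 (i, j, k, l) * a0) := by
  simp only [EE, bexp, choose2, smul_mul_assoc, smul_smul, pow_succ a0, mul_assoc]
  congr 1; ring

theorem EE_a2 (h : QRel q a0 a1 a2 a3) (i j k l : ℕ) : EE q a0 a1 a2 a3 (i, j + 1, k, l) =
    q ^ (2 * i + j) • (a2 * EE q a0 a1 a2 a3 (i, j, k, l)) := by
  have hq := h.hq
  have e := qc_pow_right h.h23 i
  simp only [EE, bexp, choose2, mul_smul_comm, smul_smul, pow_succ' a2, mul_assoc]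
  rw [← mul_assoc a2 (a3 ^ i), e]
  simp only [smul_mul_assoc, smul_smul, mul_assoc]
  congr 1
  simp only [inv_pow, ← pow_mul]
  field_simp
  ring

theorem EE_a1 (h : QRel q a0 a1 a2 a3) (i j k l : ℕ) : EE q a0 a1 a2 a3 (i, j, k + 1, l) =
    q ^ (2 * l + k) • (EE q a0 a1 a2 a3 (i, j, k, l) * a1) := by
  have hq := h.hq
  have e := qc_pow_left h.h01 l
  simp only [EE, bexp, choose2, smul_mul_assoc, smul_smul, pow_succ a1, mul_assoc, e,
    mul_smul_comm]
  congr 1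
  simp only [inv_pow, ← pow_mul]
  field_simp
  ring

theorem EE_P1 (h : QRel q a0 a1 a2 a3) (i j k l : ℕ) :
    q ^ (3 * i + 2 * j + k) • (P1 q a1 a2 a3 * EE q a0 a1 a2 a3 (i, j, k, l)) =
    EE q a0 a1 a2 a3 (i + 1, j, k + 1, l) - q ^ (1 + i + k) • EE q a0 a1 a2 a3 (i, j + 2, k, l) := by
  have hq := h.hq
  have e1 := qc_pow_right h.p1u3 i
  have e2 : P1 q a1 a2 a3 * a2 ^ j = a2 ^ j * P1 q a1 a2 a3 :=
    Commute.pow_right (show Commute _ _ from h.p1u2) j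
  have e3 := qc_pow_left h.h23 j
  have key : P1 q a1 a2 a3 * (a3 ^ i * a2 ^ j * a1 ^ k * a0 ^ l) =
      (q⁻¹ ^ 2) ^ (i + j) • (a3 ^ (i + 1) * a2 ^ j * a1 ^ (k + 1) * a0 ^ l)
      - (q ^ 2 * (q⁻¹ ^ 2) ^ i) • (a3 ^ i * a2 ^ (j + 2) * a1 ^ k * a0 ^ l) := by
    rw [show P1 q a1 a2 a3 * (a3 ^ i * a2 ^ j * a1 ^ k * a0 ^ l) =
      (P1 q a1 a2 a3 * a3 ^ i) * (a2 ^ j * (a1 ^ k * a0 ^ l)) by simp only [mul_assoc], e1,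
      smul_mul_assoc, mul_assoc, ← mul_assoc _ (a2 ^ j), e2, P1]
    simp only [mul_sub, sub_mul, mul_smul_comm, smul_mul_assoc, smul_sub, smul_smul]
    rw [← mul_assoc (a2 ^ j), e3]
    simp only [pow_succ a3, pow_succ' a1, pow_succ a2 (j + 1), pow_succ a2 j, mul_assoc, smul_mul_assoc,
      mul_smul_comm, smul_smul]
    congr 2 <;> ring
  simp only [EE, mul_smul_comm, key, smul_sub, smul_smul, bexp, choose2,
    show j + 2 = (j + 1) + 1 from rfl]
  congr 2 <;> (simp only [inv_pow, ← pow_mul]; field_simp; try ring)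

theorem EE_P0 (h : QRel q a0 a1 a2 a3) (i j k l : ℕ) :
    q ^ (3 * l + 2 * k + j) • (EE q a0 a1 a2 a3 (i, j, k, l) * P0 q a0 a1 a2) =
    EE q a0 a1 a2 a3 (i, j + 1, k, l + 1) - q ^ (1 + l + j) • EE q a0 a1 a2 a3 (i, j, k + 2, l) := by
  have hq := h.hq
  have e1 : a0 ^ l * P0 q a0 a1 a2 = (q⁻¹ ^ 2) ^ l • (P0 q a0 a1 a2 * a0 ^ l) := by
    apply qc_pow_left
    rw [h.p0u0, smul_smul]; match_scalars; field_simp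
  have e2 : a1 ^ k * P0 q a0 a1 a2 = P0 q a0 a1 a2 * a1 ^ k :=
    Commute.pow_left (show Commute _ _ from h.p0u1.symm) k
  have e3 := qc_pow_right h.h01 k
  have key : a3 ^ i * a2 ^ j * a1 ^ k * a0 ^ l * P0 q a0 a1 a2 =
      (q⁻¹ ^ 2) ^ (l + k) • (a3 ^ i * a2 ^ (j + 1) * a1 ^ k * a0 ^ (l + 1))
      - (q ^ 2 * (q⁻¹ ^ 2) ^ l) • (a3 ^ i * a2 ^ j * a1 ^ (k + 2) * a0 ^ l) := by
    rw [mul_assoc, e1, mul_smul_comm, mul_assoc, ← mul_assoc _ _ (a0 ^ l), e2, P0]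
    simp only [mul_sub, sub_mul, mul_smul_comm, smul_mul_assoc, smul_sub, smul_smul, mul_assoc]
    rw [← mul_assoc a0 (a1 ^ k), e3]
    simp only [pow_succ a2, pow_succ' a0, pow_succ' a1 (k + 1), pow_succ' a1 k, mul_assoc,
      smul_mul_assoc, mul_smul_comm, smul_smul]
    congr 2 <;> ring
  simp only [EE, smul_mul_assoc, key, smul_sub, smul_smul, bexp, choose2,
    show k + 2 = (k + 1) + 1 from rfl]
  congr 2 <;> (simp only [inv_pow, ← pow_mul]; field_simp; try ring)

/-- The lattices. -/
def QLat (q : K) (a0 a1 a2 a3 : R) (m d w : ℕ) : AddSubgroup R :=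
  AddSubgroup.closure {x | ∃ e i j k l : ℕ, i + j + k + l = d ∧ 3 * i + 2 * j + k = w ∧
    x = q ^ (e + m) • EE q a0 a1 a2 a3 (i, j, k, l)}

theorem QLat_mem (m d w e i j k l : ℕ) (he : m ≤ e) (hd : i + j + k + l = d)
    (hw : 3 * i + 2 * j + k = w) :
    q ^ e • EE q a0 a1 a2 a3 (i, j, k, l) ∈ QLat q a0 a1 a2 a3 m d w := by
  apply AddSubgroup.subset_closure
  exact ⟨e - m, i, j, k, l, hd, hw, by rw [Nat.sub_add_cancel he]⟩

theorem QLat_map {m m' d w d' w' : ℕ} (f : R →ₗ[K] R)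
    (hf : ∀ i j k l : ℕ, i + j + k + l = d → 3 * i + 2 * j + k = w →
      f (EE q a0 a1 a2 a3 (i, j, k, l)) ∈ QLat q a0 a1 a2 a3 m' d' w')
    {x : R} (hx : x ∈ QLat q a0 a1 a2 a3 m d w) : f x ∈ QLat q a0 a1 a2 a3 (m + m') d' w' := by
  have sc : ∀ e y, y ∈ QLat q a0 a1 a2 a3 m' d' w' → q ^ (e + m) • y ∈ QLat q a0 a1 a2 a3 (m + m') d' w' := by
    intro e y hy
    induction hy using AddSubgroup.closure_induction with
    | mem y hy =>
      obtain ⟨e', i, j, k, l, h1, h2, rfl⟩ := hy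
      rw [smul_smul, ← pow_add]
      exact QLat_mem _ _ _ _ _ _ _ _ (by omega) h1 h2
    | zero => rw [smul_zero]; exact zero_mem _
    | add y z _ _ h1 h2 => rw [smul_add]; exact add_mem h1 h2
    | neg y _ h1 => rw [smul_neg]; exact neg_mem h1
  induction hx using AddSubgroup.closure_induction with
  | mem x hx =>
    obtain ⟨e, i, j, k, l, h1, h2, rfl⟩ := hx
    rw [map_smul]
    exact sc _ _ (hf i j k l h1 h2)
  | zero => rw [map_zero]; exact zero_mem _
  | add y z _ _ h1 h2 => rw [map_add]; exact add_mem h1 h2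
  | neg y _ h1 => rw [map_neg]; exact neg_mem h1

theorem QLat_mono {d w : ℕ} {x : R} (hx : x ∈ QLat q a0 a1 a2 a3 1 d w) :
    x ∈ QLat q a0 a1 a2 a3 0 d w := by
  induction hx using AddSubgroup.closure_induction with
  | mem x hx =>
    obtain ⟨e, i, j, k, l, h1, h2, rfl⟩ := hx
    exact QLat_mem _ _ _ _ _ _ _ _ (by omega) h1 h2
  | zero => exact zero_mem _
  | add y z _ _ h1 h2 => exact add_mem h1 h2
  | neg y _ h1 => exact neg_mem h1

theorem QLat_a3 {m n d w : ℕ} (hw : w ≤ 3 * n) {x : R} (hx : x ∈ QLat q a0 a1 a2 a3 m d w) :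
    q ^ n • (a3 * x) ∈ QLat q a0 a1 a2 a3 m (d + 1) (w + 3) := by
  refine QLat_map (m' := 0) (q ^ n • LinearMap.mulLeft K a3) (fun i j k l h1 h2 => ?_) hx
  have : (q ^ n • LinearMap.mulLeft K a3) (EE q a0 a1 a2 a3 (i, j, k, l))
    = q ^ (n - i) • EE q a0 a1 a2 a3 (i + 1, j, k, l) := by
    rw [EE_a3, smul_smul, ← pow_add, show n - i + i = n by omega]; simp
  rw [this]
  exact QLat_mem _ _ _ _ _ _ _ _ (by omega) (by omega) (by omega)

theorem QLat_a0 {m n d w : ℕ} (hw : 3 * d ≤ w + 3 * n) {x : R} (hx : x ∈ QLat q a0 a1 a2 a3 m d w) :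
    q ^ n • (x * a0) ∈ QLat q a0 a1 a2 a3 m (d + 1) w := by
  refine QLat_map (m' := 0) (q ^ n • LinearMap.mulRight K a0) (fun i j k l h1 h2 => ?_) hx
  have : (q ^ n • LinearMap.mulRight K a0) (EE q a0 a1 a2 a3 (i, j, k, l))
    = q ^ (n - l) • EE q a0 a1 a2 a3 (i, j, k, l + 1) := by
    rw [EE_a0, smul_smul, ← pow_add, show n - l + l = n by omega]; simp
  rw [this]
  exact QLat_mem _ _ _ _ _ _ _ _ (by omega) (by omega) (by omega)

theorem QLat_a2 (h : QRel q a0 a1 a2 a3) {m n d w : ℕ} (hw : 2 * w ≤ 3 * n) {x : R}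
    (hx : x ∈ QLat q a0 a1 a2 a3 m d w) :
    q ^ n • (a2 * x) ∈ QLat q a0 a1 a2 a3 m (d + 1) (w + 2) := by
  refine QLat_map (m' := 0) (q ^ n • LinearMap.mulLeft K a2) (fun i j k l h1 h2 => ?_) hx
  have : (q ^ n • LinearMap.mulLeft K a2) (EE q a0 a1 a2 a3 (i, j, k, l))
    = q ^ (n - (2 * i + j)) • EE q a0 a1 a2 a3 (i, j + 1, k, l) := by
    rw [EE_a2 h, smul_smul, ← pow_add, show n - (2 * i + j) + (2 * i + j) = n by omega]; simp
  rw [this]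
  exact QLat_mem _ _ _ _ _ _ _ _ (by omega) (by omega) (by omega)

theorem QLat_a1 (h : QRel q a0 a1 a2 a3) {m n d w : ℕ} (hw : 6 * d ≤ 2 * w + 3 * n) {x : R}
    (hx : x ∈ QLat q a0 a1 a2 a3 m d w) :
    q ^ n • (x * a1) ∈ QLat q a0 a1 a2 a3 m (d + 1) (w + 1) := by
  refine QLat_map (m' := 0) (q ^ n • LinearMap.mulRight K a1) (fun i j k l h1 h2 => ?_) hx
  have : (q ^ n • LinearMap.mulRight K a1) (EE q a0 a1 a2 a3 (i, j, k, l))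
    = q ^ (n - (2 * l + k)) • EE q a0 a1 a2 a3 (i, j, k + 1, l) := by
    rw [EE_a1 h, smul_smul, ← pow_add, show n - (2 * l + k) + (2 * l + k) = n by omega]; simp
  rw [this]
  exact QLat_mem _ _ _ _ _ _ _ _ (by omega) (by omega) (by omega)

theorem QLat_P1 (h : QRel q a0 a1 a2 a3) {m d w : ℕ} {x : R} (hx : x ∈ QLat q a0 a1 a2 a3 m d w) :
    q ^ w • (P1 q a1 a2 a3 * x) ∈ QLat q a0 a1 a2 a3 m (d + 2) (w + 4) := by
  refine QLat_map (m' := 0) (q ^ w • LinearMap.mulLeft K (P1 q a1 a2 a3)) (fun i j k l h1 h2 => ?_) hx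
  have : (q ^ w • LinearMap.mulLeft K (P1 q a1 a2 a3)) (EE q a0 a1 a2 a3 (i, j, k, l))
    = q ^ 0 • EE q a0 a1 a2 a3 (i + 1, j, k + 1, l)
      - q ^ (1 + i + k) • EE q a0 a1 a2 a3 (i, j + 2, k, l) := by
    rw [pow_zero, one_smul, ← EE_P1 h, ← h2]; simp
  rw [this]
  exact sub_mem (QLat_mem _ _ _ _ _ _ _ _ (by omega) (by omega) (by omega))
    (QLat_mem _ _ _ _ _ _ _ _ (by omega) (by omega) (by omega))

theorem QLat_P0 (h : QRel q a0 a1 a2 a3) {m n d w : ℕ} (hn : 3 * d = w + n)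
    {x : R} (hx : x ∈ QLat q a0 a1 a2 a3 m d w) :
    q ^ n • (x * P0 q a0 a1 a2) ∈ QLat q a0 a1 a2 a3 m (d + 2) (w + 2) := by
  refine QLat_map (m' := 0) (q ^ n • LinearMap.mulRight K (P0 q a0 a1 a2)) (fun i j k l h1 h2 => ?_) hx
  have : (q ^ n • LinearMap.mulRight K (P0 q a0 a1 a2)) (EE q a0 a1 a2 a3 (i, j, k, l))
    = q ^ 0 • EE q a0 a1 a2 a3 (i, j + 1, k, l + 1)
      - q ^ (1 + l + j) • EE q a0 a1 a2 a3 (i, j, k + 2, l) := by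
    rw [pow_zero, one_smul, ← EE_P0 h, show n = 3 * l + 2 * k + j by omega]; simp
  rw [this]
  exact sub_mem (QLat_mem _ _ _ _ _ _ _ _ (by omega) (by omega) (by omega))
    (QLat_mem _ _ _ _ _ _ _ _ (by omega) (by omega) (by omega))

theorem QLat_q {m d w : ℕ} (e : ℕ) {x : R} (hx : x ∈ QLat q a0 a1 a2 a3 m d w) :
    q ^ e • x ∈ QLat q a0 a1 a2 a3 (m + e) d w := by
  refine QLat_map (m' := e) (q ^ e • LinearMap.id) (fun i j k l h1 h2 => ?_) hx
  exact QLat_mem _ _ _ _ _ _ _ _ (by omega) (by omega) (by omega)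
end AbstractLat

section AbstractMain
variable {K R : Type*} [Field K] [Ring R] [Algebra K R] {q : K} {a0 a1 a2 a3 : R}

/-- Normalised `VV`. -/
def ww (q : K) (a0 a1 a2 a3 : R) (n : ℕ) : R :=
  q ^ (4 * Nat.choose n 2) • VV q (ZZ q a0 a1 a2 a3) (P0 q a0 a1 a2 * P1 q a1 a2 a3) (n + 1)

/-- Normalised `TT`. -/
def tau (q : K) (a0 a1 a2 a3 : R) (n : ℕ) : R :=
  q ^ (4 * Nat.choose n 2 + n) • TT q (ZZ q a0 a1 a2 a3) (P0 q a0 a1 a2 * P1 q a1 a2 a3) a3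
    (P1 q a1 a2 a3 * a2) n

theorem tau_succ (n : ℕ) : tau q a0 a1 a2 a3 (n + 1) =
    q ^ (n + 1) • (a3 * ww q a0 a1 a2 a3 (n + 1))
      - q • q ^ (3 * n + 2) • (P1 q a1 a2 a3 * (q ^ (2 * n) • (a2 * ww q a0 a1 a2 a3 n))) := by
  simp only [tau, ww, TT, choose2, mul_smul_comm, smul_sub, smul_smul, mul_assoc]
  congr 2 <;> ring

theorem ww_succ (h : QRel q a0 a1 a2 a3) (n : ℕ) : ww q a0 a1 a2 a3 (n + 2) =
    q ^ (n + 1) • (tau q a0 a1 a2 a3 (n + 1) * a0)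
      - q • q • q ^ (3 * n + 2) • ((q ^ (2 * n) • (tau q a0 a1 a2 a3 n * a1)) * P0 q a0 a1 a2) := by
  have e := h.VT rfl rfl rfl n
  have hc : 4 * Nat.choose (n + 2) 2 = (4 * Nat.choose n 2 + 6 * n + 2) + (2 * n + 2) := by
    rw [choose2, choose2]; ring
  rw [ww, hc, pow_add, ← smul_smul, e]
  simp only [tau, choose2, smul_mul_assoc, smul_sub, smul_smul, mul_assoc]
  congr 2 <;> ring

theorem tau_step (h : QRel q a0 a1 a2 a3) (n : ℕ)
    (h1 : ww q a0 a1 a2 a3 (n + 1) - EE q a0 a1 a2 a3 (n + 1, 0, 0, n + 1) ∈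
      QLat q a0 a1 a2 a3 1 (2 * (n + 1)) (3 * (n + 1)))
    (h0 : ww q a0 a1 a2 a3 n ∈ QLat q a0 a1 a2 a3 0 (2 * n) (3 * n)) :
    tau q a0 a1 a2 a3 (n + 1) - EE q a0 a1 a2 a3 (n + 2, 0, 0, n + 1) ∈
      QLat q a0 a1 a2 a3 1 (2 * (n + 1) + 1) (3 * (n + 1) + 3) := by
  have g1 := QLat_a3 (n := n + 1) (by omega) h1
  have g2 := QLat_q 1 (QLat_P1 h (QLat_a2 h (n := 2 * n) (by omega) h0))
  rw [pow_one] at g2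
  have e : tau q a0 a1 a2 a3 (n + 1) - EE q a0 a1 a2 a3 (n + 2, 0, 0, n + 1) =
      q ^ (n + 1) • (a3 * (ww q a0 a1 a2 a3 (n + 1) - EE q a0 a1 a2 a3 (n + 1, 0, 0, n + 1)))
      - q • q ^ (3 * n + 2) • (P1 q a1 a2 a3 * (q ^ (2 * n) • (a2 * ww q a0 a1 a2 a3 n))) := by
    rw [tau_succ, EE_a3, mul_sub, smul_sub]; abel
  rw [e]
  exact sub_mem g1 g2

theorem ww_step (h : QRel q a0 a1 a2 a3) (n : ℕ)
    (h1 : tau q a0 a1 a2 a3 (n + 1) - EE q a0 a1 a2 a3 (n + 2, 0, 0, n + 1) ∈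
      QLat q a0 a1 a2 a3 1 (2 * (n + 1) + 1) (3 * (n + 1) + 3))
    (h0 : tau q a0 a1 a2 a3 n ∈ QLat q a0 a1 a2 a3 0 (2 * n + 1) (3 * n + 3)) :
    ww q a0 a1 a2 a3 (n + 2) - EE q a0 a1 a2 a3 (n + 2, 0, 0, n + 2) ∈
      QLat q a0 a1 a2 a3 1 (2 * (n + 2)) (3 * (n + 2)) := by
  have g1 := QLat_a0 (n := n + 1) (by omega) h1
  have g2 := QLat_q 1 (QLat_P0 h (n := 3 * n + 2) (by omega) (QLat_a1 h (n := 2 * n) (by omega) h0))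
  have g3 := QLat_q 1 (QLat_mono g2)
  rw [pow_one] at g3
  have e : ww q a0 a1 a2 a3 (n + 2) - EE q a0 a1 a2 a3 (n + 2, 0, 0, n + 2) =
      q ^ (n + 1) • ((tau q a0 a1 a2 a3 (n + 1) - EE q a0 a1 a2 a3 (n + 2, 0, 0, n + 1)) * a0)
      - q • q • q ^ (3 * n + 2) • ((q ^ (2 * n) • (tau q a0 a1 a2 a3 n * a1)) * P0 q a0 a1 a2) := by
    rw [ww_succ h, EE_a0, sub_mul, smul_sub]; abel
  rw [e]
  exact sub_mem g1 g3

theorem EE_mem (i j k l d w : ℕ) (hd : i + j + k + l = d)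
    (hw : 3 * i + 2 * j + k = w) :
    EE q a0 a1 a2 a3 (i, j, k, l) ∈ QLat q a0 a1 a2 a3 0 d w := by
  have := QLat_mem (q := q) (a0 := a0) (a1 := a1) (a2 := a2) (a3 := a3) 0 d w 0 i j k l le_rfl hd hw
  simpa using this

theorem main_lat (h : QRel q a0 a1 a2 a3) (n : ℕ) :
    (ww q a0 a1 a2 a3 n - EE q a0 a1 a2 a3 (n, 0, 0, n) ∈
      QLat q a0 a1 a2 a3 1 (2 * n) (3 * n) ∧
    tau q a0 a1 a2 a3 n - EE q a0 a1 a2 a3 (n + 1, 0, 0, n) ∈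
      QLat q a0 a1 a2 a3 1 (2 * n + 1) (3 * n + 3)) ∧
    (ww q a0 a1 a2 a3 (n + 1) - EE q a0 a1 a2 a3 (n + 1, 0, 0, n + 1) ∈
      QLat q a0 a1 a2 a3 1 (2 * (n + 1)) (3 * (n + 1)) ∧
    tau q a0 a1 a2 a3 (n + 1) - EE q a0 a1 a2 a3 (n + 2, 0, 0, n + 1) ∈
      QLat q a0 a1 a2 a3 1 (2 * (n + 1) + 1) (3 * (n + 1) + 3)) := by
  induction n with
  | zero =>
    have w0 : ww q a0 a1 a2 a3 0 = EE q a0 a1 a2 a3 (0, 0, 0, 0) := by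
      simp [ww, VV, EE, bexp]
    have t0 : tau q a0 a1 a2 a3 0 = EE q a0 a1 a2 a3 (1, 0, 0, 0) := by
      simp [tau, TT_zero, EE, bexp]
    have w1 : ww q a0 a1 a2 a3 (0 + 1) - EE q a0 a1 a2 a3 (0 + 1, 0, 0, 0 + 1) ∈
      QLat q a0 a1 a2 a3 1 (2 * (0 + 1)) (3 * (0 + 1)) := by
      have : ww q a0 a1 a2 a3 (0 + 1) - EE q a0 a1 a2 a3 (0 + 1, 0, 0, 0 + 1) =
          - (q ^ 2 • EE q a0 a1 a2 a3 (0, 1, 1, 0)) := by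
        simp [ww, VV, EE, bexp, ZZ]
      rw [this]
      exact neg_mem (QLat_mem _ _ _ _ _ _ _ _ (by omega) (by omega) (by omega))
    refine ⟨⟨?_, ?_⟩, w1, ?_⟩
    · rw [w0, sub_self]; exact zero_mem _
    · rw [t0, sub_self]; exact zero_mem _
    · refine tau_step h 0 w1 ?_
      rw [w0]; exact EE_mem _ _ _ _ _ _ (by omega) (by omega)
  | succ n ih =>
    obtain ⟨⟨hw0, ht0⟩, hw1, ht1⟩ := ih
    have a : tau q a0 a1 a2 a3 n ∈ QLat q a0 a1 a2 a3 0 (2 * n + 1) (3 * n + 3) := by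
      have := add_mem (QLat_mono ht0) (EE_mem (n + 1) 0 0 n _ _ (by omega) (by omega))
      rwa [sub_add_cancel] at this
    have b : ww q a0 a1 a2 a3 (n + 1) ∈ QLat q a0 a1 a2 a3 0 (2 * (n + 1)) (3 * (n + 1)) := by
      have := add_mem (QLat_mono hw1) (EE_mem (n + 1) 0 0 (n + 1) _ _ (by omega) (by omega))
      rwa [sub_add_cancel] at this
    have c := ww_step h n ht1 a
    exact ⟨⟨hw1, ht1⟩, c, tau_step h (n + 1) c b⟩

end AbstractMain

section Concrete

theorem qq_ne : qq ≠ 0 := RatFunc.X_ne_zero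

theorem qq_pow_ne_one (n : ℕ) (hn : n ≠ 0) : qq ^ n ≠ 1 := by
  intro h
  have := congrArg RatFunc.intDegree h
  have e : qq ^ n = algebraMap (Polynomial ℚ) F (Polynomial.X ^ n) := by
    rw [map_pow, RatFunc.algebraMap_X]; rfl
  rw [e, RatFunc.intDegree_polynomial, RatFunc.intDegree_one, Polynomial.natDegree_X_pow] at this
  exact hn (by exact_mod_cast this)

theorem kk_ne : (1 - (qq⁻¹) ^ 2) ≠ 0 := by
  intro h
  apply qq_pow_ne_one 2 (by norm_num)
  have h2 := qq_ne
  field_simp at h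
  linear_combination h

section AbsDer
variable {K R : Type*} [Field K] [Ring R] [Algebra K R] {q : K}

/-- The derivation `ad A`. -/
def DA (A x : R) : R := A * x - x * A

theorem DA_mul (A x y : R) : DA A (x * y) = DA A x * y + x * DA A y := by
  simp only [DA, sub_mul, mul_sub, mul_assoc]; abel
theorem DA_smul (A : R) (c : K) (x : R) : DA A (c • x) = c • DA A x := by
  simp only [DA, smul_sub, mul_smul_comm, smul_mul_assoc]
theorem DA_add (A x y : R) : DA A (x + y) = DA A x + DA A y := by
  simp only [DA, mul_add, add_mul]; abel

theorem adA (c : K) (hc : c ≠ 0) (A : R) (f : ℕ) (v w : R) (hw : w = DA A v) :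
    DA A ((c⁻¹) ^ f • v) = c ^ 2 • (c⁻¹) ^ (f + 2) • w := by
  rw [hw, DA_smul, smul_smul]
  congr 1
  rw [pow_add]
  field_simp

theorem smul_cancel' {c : K} (hc : c ≠ 0) {x y : R} (h : c ^ 2 • x = c ^ 2 • y) : x = y :=
  smul_right_injective R (pow_ne_zero 2 hc) h

theorem QRelU (hq : q ≠ 0) {A u0 u1 u2 u3 : R} {c : K} (hc : c ≠ 0)
    (DA0 : DA A u0 = c ^ 2 • u1) (DA1 : DA A u1 = c ^ 2 • u2) (DA2 : DA A u2 = c ^ 2 • u3)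
    (h01 : u0 * u1 = (q⁻¹) ^ 2 • (u1 * u0)) (h12 : u1 * u2 = (q⁻¹) ^ 2 • (u2 * u1))
    (h23 : u2 * u3 = (q⁻¹) ^ 2 • (u3 * u2)) : QRel q u0 u1 u2 u3 := by
  have h02 : u0 * u2 = (q⁻¹) ^ 2 • (u2 * u0) + ((q⁻¹) ^ 2 - 1) • (u1 * u1) := by
    have := congrArg (DA A) h01
    simp only [DA_mul, DA_smul, DA0, DA1, smul_mul_assoc, mul_smul_comm] at this
    have := smul_cancel' hc (x := u1 * u1 + u0 * u2) (y := (q⁻¹) ^ 2 • (u2 * u0 + u1 * u1))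
      (by rw [smul_add, this]; module)
    rw [← sub_eq_zero] at this ⊢
    rw [← this]; module
  have h13 : u1 * u3 = (q⁻¹) ^ 2 • (u3 * u1) + ((q⁻¹) ^ 2 - 1) • (u2 * u2) := by
    have := congrArg (DA A) h12
    simp only [DA_mul, DA_smul, DA1, DA2, smul_mul_assoc, mul_smul_comm] at this
    have := smul_cancel' hc (x := u2 * u2 + u1 * u3) (y := (q⁻¹) ^ 2 • (u3 * u1 + u2 * u2))
      (by rw [smul_add, this]; module)
    rw [← sub_eq_zero] at this ⊢
    rw [← this]; module
  have h03 : u0 * u3 = (q⁻¹) ^ 2 • (u3 * u0) + ((q⁻¹) ^ 4 - 1) • (u2 * u1) := by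
    have := congrArg (DA A) h02
    simp only [DA_mul, DA_smul, DA_add, DA0, DA1, DA2, smul_mul_assoc, mul_smul_comm] at this
    have := smul_cancel' hc (x := u1 * u2 + u0 * u3) (y := (q⁻¹) ^ 2 • (u3 * u0 + u2 * u1) +
      ((q⁻¹) ^ 2 - 1) • (u2 * u1 + u1 * u2))
      (by rw [smul_add, this]; module)
    rw [h12] at this
    rw [← sub_eq_zero] at this ⊢
    rw [← this]; module
  exact ⟨hq, h01, h12, h23, h02, h13, h03⟩
end AbsDer

theorem QRelS (h01 : us0 * us1 = (qq⁻¹) ^ 2 • (us1 * us0))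
    (h12 : us1 * us2 = (qq⁻¹) ^ 2 • (us2 * us1))
    (h23 : us2 * us3 = (qq⁻¹) ^ 2 • (us3 * us2)) : QRel qq us0 us1 us2 us3 := by
  have h : QRel qq u0 u1 u2 u3 := QRelU (A := Aelt) qq_ne kk_ne
    (by have := adA _ kk_ne Aelt 0 v0 v1 rfl
        rw [pow_zero, one_smul] at this
        exact this)
    (adA _ kk_ne Aelt 2 v1 v2 rfl) (adA _ kk_ne Aelt 4 v2 v3 rfl)
    (congrArg Subtype.val h01) (congrArg Subtype.val h12) (congrArg Subtype.val h23)
  exact ⟨h.hq, h01, h12, h23, Subtype.ext h.h02, Subtype.ext h.h13, Subtype.ext h.h03⟩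

/-- Abstract form of the hypotheses. -/
structure Setup {R : Type*} [Ring R] [Algebra F R] (bar : F →+* F) (σ : R → R) (B : Idx → R)
    (a0 a1 a2 a3 : R) : Prop where
  li : LinearIndependent F
    (fun b : Idx => a3 ^ b.1 * a2 ^ b.2.1 * a1 ^ b.2.2.1 * a0 ^ b.2.2.2)
  hbar : bar qq = qq⁻¹
  add : ∀ x y, σ (x + y) = σ x + σ y
  mul : ∀ x y, σ (x * y) = σ y * σ x
  sm : ∀ (c : F) (x : R), σ (c • x) = bar c • σ x
  s0 : σ a0 = a0
  s1 : σ a1 = qq ^ 2 • a1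
  s2 : σ a2 = qq ^ 4 • a2
  s3 : σ a3 = qq ^ 6 • a3
  cond : ∀ a, ∃ φ : Idx →₀ Polynomial ℤ, (↑φ.support : Set Idx) ⊆ Sset a ∧
    B a - EE qq a0 a1 a2 a3 a =
      φ.sum fun b p => (qq * Polynomial.eval₂ (Int.castRingHom F) qq p) • EE qq a0 a1 a2 a3 b
  sig : ∀ a, σ (B a) = qq ^ (-Nnum a) • B a

theorem setup_of {bar : F →+* F} {σ : Sgen → Sgen} {B : Idx → Sgen}
    (hPBW : LinearIndependent F mon) (hσ : SigmaHyp bar σ)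
    (hB : DCB bar σ B) : Setup bar σ B us0 us1 us2 us3 := by
  obtain ⟨hbar, -, hadd, hmul, hsm, hs0, hs1, hs2, hs3⟩ := hσ
  exact ⟨hPBW, hbar, hadd, hmul, hsm, hs0, hs1, hs2, hs3, fun a => (hB a).1, fun a => (hB a).2⟩

section Abs
variable {R : Type*} [Ring R] [Algebra F R] {bar : F →+* F} {σ : R → R} {B : Idx → R}
    {a0 a1 a2 a3 : R}

theorem Sset_empty {a : Idx} (h : ∀ s r : ℕ, s ≤ a.1 → r ≤ a.2.2.2 →
    (r : ℤ) ≤ a.2.1 + 2 * s → (s : ℤ) ≤ a.2.2.1 + 2 * r → s = 0 ∧ r = 0) : Sset a = ∅ := by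
  ext ⟨b1, b2, b3, b4⟩
  obtain ⟨a1, a2, a3, a4⟩ := a
  simp only [Sset, tri, Set.mem_ofPred_eq, Set.mem_empty_iff_false, iff_false, not_and, not_not]
  rintro ⟨s, r, h1, h2, h3, h4⟩
  obtain ⟨rfl, rfl⟩ := h s r (by simp only; omega) (by simp only; omega) (by simp only; omega)
    (by simp only; omega)
  simp only [Prod.mk.injEq]; omega

theorem B_eq_EE (S : Setup bar σ B a0 a1 a2 a3) {a : Idx} (hs : Sset a = ∅) :
    B a = EE qq a0 a1 a2 a3 a := by
  obtain ⟨φ, h1, h2⟩ := S.cond a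
  rw [hs, Set.subset_empty_iff, Finset.coe_eq_empty, Finsupp.support_eq_empty] at h1
  rw [h1, Finsupp.sum_zero_index, sub_eq_zero] at h2
  exact h2

theorem Setup.rel01 (S : Setup bar σ B a0 a1 a2 a3) : a0 * a1 = (qq⁻¹) ^ 2 • (a1 * a0) := by
  have hq := qq_ne
  have h2 := S.sig (0, 0, 1, 1)
  rw [B_eq_EE S (Sset_empty (by intro s r; simp only; omega))] at h2
  simp only [EE, bexp, Nnum, S.sm, S.mul, map_pow, pow_zero, one_mul, mul_one, pow_one, S.s0, S.s1,
      mul_smul_comm, S.hbar] at h2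
  norm_num at h2
  rw [← h2, smul_smul]
  simp [hq]

theorem Setup.rel12 (S : Setup bar σ B a0 a1 a2 a3) : a1 * a2 = (qq⁻¹) ^ 2 • (a2 * a1) := by
  have hq := qq_ne
  have h2 := S.sig (0, 1, 1, 0)
  rw [B_eq_EE S (Sset_empty (by intro s r; simp only; omega))] at h2
  simp only [EE, bexp, Nnum, S.sm, S.mul, map_pow, pow_zero, one_mul, mul_one, pow_one, S.s2, S.s1,
      mul_smul_comm, smul_mul_assoc, smul_smul, S.hbar] at h2
  norm_num at h2
  have h3 := congrArg (fun x => (qq⁻¹ ^ 6) • x) h2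
  simp only [smul_smul] at h3
  convert h3 using 1
  · rw [show qq⁻¹ ^ 6 * (qq ^ 4 * qq ^ 2) = 1 by field_simp, one_smul]
  · congr 1
    field_simp

theorem Setup.rel23 (S : Setup bar σ B a0 a1 a2 a3) : a2 * a3 = (qq⁻¹) ^ 2 • (a3 * a2) := by
  have hq := qq_ne
  have h2 := S.sig (1, 1, 0, 0)
  rw [B_eq_EE S (Sset_empty (by intro s r; simp only; omega))] at h2
  simp only [EE, bexp, Nnum, S.sm, S.mul, map_pow, pow_zero, one_mul, mul_one, pow_one, S.s2, S.s3,
      mul_smul_comm, smul_mul_assoc, smul_smul, S.hbar] at h2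
  norm_num at h2
  have h3 := congrArg (fun x => (qq⁻¹ ^ 10) • x) h2
  simp only [smul_smul] at h3
  convert h3 using 1
  · rw [show qq⁻¹ ^ 10 * (qq ^ 6 * qq ^ 4) = 1 by field_simp, one_smul]
  · congr 1
    field_simp

end Abs
end Concrete

section Uniq

theorem evalq_eq (P : Polynomial ℤ) : Polynomial.eval₂ (Int.castRingHom F) qq P =
    algebraMap (Polynomial ℚ) F (P.map (Int.castRingHom ℚ)) := by
  have : Polynomial.eval₂RingHom (Int.castRingHom F) qq =
      (algebraMap (Polynomial ℚ) F).comp (Polynomial.mapRingHom (Int.castRingHom ℚ)) := by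
    apply Polynomial.ringHom_ext
    · intro a; simp
    · simp [qq]
  exact congrArg (fun f => f P) this

theorem evalq_inj : Function.Injective (Polynomial.eval₂ (Int.castRingHom F) qq) := by
  intro P Q h
  rw [evalq_eq, evalq_eq] at h
  exact Polynomial.map_injective _ Int.cast_injective (RatFunc.algebraMap_injective ℚ h)

theorem bar_fixed {bar : F →+* F} (hbar : bar qq = qq⁻¹) (p : Polynomial ℤ)
    (h : bar (qq * Polynomial.eval₂ (Int.castRingHom F) qq p) =
      qq * Polynomial.eval₂ (Int.castRingHom F) qq p) :
    qq * Polynomial.eval₂ (Int.castRingHom F) qq p = 0 := by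
  have e : qq * Polynomial.eval₂ (Int.castRingHom F) qq p =
      Polynomial.eval₂ (Int.castRingHom F) qq (Polynomial.X * p) := by
    rw [Polynomial.eval₂_mul, Polynomial.eval₂_X]
  rw [e] at h ⊢
  generalize hP : Polynomial.X * p = P at h ⊢
  rw [Polynomial.hom_eval₂, hbar, show bar.comp (Int.castRingHom F) = Int.castRingHom F from
    RingHom.ext_int _ _] at h
  by_contra hne
  have hP0 : P ≠ 0 := by rintro rfl; simp at hne
  letI : Invertible qq := invertibleOfNonzero qq_ne
  letI : Invertible (qq⁻¹) := invertibleOfNonzero (inv_ne_zero qq_ne)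
  have r := Polynomial.eval₂_reverse_mul_pow (Int.castRingHom F) (qq⁻¹) P
  rw [invOf_eq_inv, inv_inv, h] at r
  have r2 : Polynomial.eval₂ (Int.castRingHom F) qq P.reverse =
      Polynomial.eval₂ (Int.castRingHom F) qq (P * Polynomial.X ^ P.natDegree) := by
    rw [Polynomial.eval₂_mul, Polynomial.eval₂_X_pow, ← r, mul_assoc, ← mul_pow,
      inv_mul_cancel₀ qq_ne, one_pow, mul_one]
  have r3 := congrArg Polynomial.natDegree (evalq_inj r2)
  rw [Polynomial.natDegree_mul_X_pow _ hP0] at r3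
  have r4 := Polynomial.reverse_natDegree_le P
  have r5 : P.natDegree = p.natDegree + 1 := by
    rw [← hP, Polynomial.natDegree_X_mul]
    rintro rfl; simp at hP; exact hP0 hP.symm
  omega

/-- The height function. -/
def hgt (b : Idx) : ℕ := b.1 + b.2.2.2

theorem hgt_lt {a b : Idx} (h : b ∈ Sset a) : hgt b < hgt a := by
  obtain ⟨⟨s, r, h1, h2, h3, h4⟩, hne⟩ := h
  obtain ⟨a1, a2, a3, a4⟩ := a
  obtain ⟨b1, b2, b3, b4⟩ := b
  simp only [hgt, ne_eq, Prod.mk.injEq] at *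
  omega

variable {R : Type*} [Ring R] [Algebra F R] {bar : F →+* F} {σ : R → R} {B : Idx → R}
    {a0 a1 a2 a3 : R}

theorem QLat_poly (p : Polynomial ℤ) {i j k l d w : ℕ} (hd : i + j + k + l = d)
    (hw : 3 * i + 2 * j + k = w) :
    (qq * Polynomial.eval₂ (Int.castRingHom F) qq p) • EE qq a0 a1 a2 a3 (i, j, k, l) ∈
      QLat qq a0 a1 a2 a3 1 d w := by
  induction p using Polynomial.induction_on' with
  | add p r hp hr => rw [Polynomial.eval₂_add, mul_add, add_smul]; exact add_mem hp hr
  | monomial n a =>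
    have : (qq * Polynomial.eval₂ (Int.castRingHom F) qq (Polynomial.monomial n a)) •
        EE qq a0 a1 a2 a3 (i, j, k, l) = a • (qq ^ (n + 1) • EE qq a0 a1 a2 a3 (i, j, k, l)) := by
      rw [Polynomial.eval₂_monomial, ← Int.cast_smul_eq_zsmul F, smul_smul]
      congr 1
      simp only [eq_intCast]; ring
    rw [this]
    exact zsmul_mem (QLat_mem _ _ _ _ _ _ _ _ (by omega) hd hw) a

theorem Setup.B_mem (S : Setup bar σ B a0 a1 a2 a3) (i j k l d w : ℕ) (hd : i + j + k + l = d)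
    (hw : 3 * i + 2 * j + k = w) :
    B (i, j, k, l) - EE qq a0 a1 a2 a3 (i, j, k, l) ∈ QLat qq a0 a1 a2 a3 1 d w := by
  obtain ⟨φ, h1, h2⟩ := S.cond (i, j, k, l)
  rw [h2]
  apply sum_mem
  rintro ⟨b1, b2, b3, b4⟩ hb
  obtain ⟨⟨s, r, e1, e2, e3, e4⟩, -⟩ := h1 hb
  simp only at e1 e2 e3 e4
  exact QLat_poly _ (by omega) (by omega)

theorem QLat_coord {d w : ℕ} {x : R} (hx : x ∈ QLat qq a0 a1 a2 a3 1 d w) :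
    ∃ g : Idx →₀ F, x = Finsupp.linearCombination F (EE qq a0 a1 a2 a3) g ∧
      (∀ b, ∃ p : Polynomial ℤ, g b = qq * Polynomial.eval₂ (Int.castRingHom F) qq p) ∧
      (∀ b, g b ≠ 0 → b.1 + b.2.1 + b.2.2.1 + b.2.2.2 = d ∧ 3 * b.1 + 2 * b.2.1 + b.2.2.1 = w) := by
  induction hx using AddSubgroup.closure_induction with
  | mem x hx =>
    obtain ⟨e, i, j, k, l, h1, h2, rfl⟩ := hx
    refine ⟨Finsupp.single (i, j, k, l) (qq ^ (e + 1)), by simp, fun b => ?_, fun b hb => ?_⟩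
    · rw [Finsupp.single_apply]
      split_ifs
      · exact ⟨Polynomial.X ^ e, by rw [Polynomial.eval₂_X_pow, pow_succ']⟩
      · exact ⟨0, by simp⟩
    · rw [Finsupp.single_apply] at hb
      split_ifs at hb with h
      · subst h; exact ⟨h1, h2⟩
      · exact absurd rfl hb
  | zero => exact ⟨0, by simp, fun b => ⟨0, by simp⟩, fun b hb => absurd rfl hb⟩
  | add y z _ _ hy hz =>
    obtain ⟨g, rfl, hg, hg'⟩ := hy
    obtain ⟨f, rfl, hf, hf'⟩ := hz
    refine ⟨g + f, by simp, fun b => ?_, fun b hb => ?_⟩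
    · obtain ⟨p, hp⟩ := hg b
      obtain ⟨r, hr⟩ := hf b
      exact ⟨p + r, by rw [Finsupp.add_apply, hp, hr, Polynomial.eval₂_add, mul_add]⟩
    · by_cases h : g b = 0
      · exact hf' b (by simpa [h] using hb)
      · exact hg' b h
  | neg y _ hy =>
    obtain ⟨g, rfl, hg, hg'⟩ := hy
    refine ⟨-g, by simp, fun b => ?_, fun b hb => hg' b (by simpa using hb)⟩
    obtain ⟨p, hp⟩ := hg b
    exact ⟨-p, by rw [Finsupp.neg_apply, hp, Polynomial.eval₂_neg, mul_neg]⟩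

theorem Setup.liE (S : Setup bar σ B a0 a1 a2 a3) : LinearIndependent F (EE qq a0 a1 a2 a3) :=
  S.li.units_smul (fun b => (Units.mk0 qq qq_ne) ^ bexp b) |> fun h => by
    convert h using 1
    funext b
    simp [EE, Units.smul_def]

/-- `σ` as an additive map. -/
def Setup.sa (S : Setup bar σ B a0 a1 a2 a3) : R →+ R := AddMonoidHom.mk' σ S.add

theorem Setup.sub (S : Setup bar σ B a0 a1 a2 a3) (x y : R) : σ (x - y) = σ x - σ y :=
  map_sub S.sa x y

theorem Setup.tri (S : Setup bar σ B a0 a1 a2 a3) (m : ℕ) : ∀ b : Idx, hgt b = m →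
    σ (EE qq a0 a1 a2 a3 b) - qq ^ (-Nnum b) • EE qq a0 a1 a2 a3 b ∈
      Submodule.span F (EE qq a0 a1 a2 a3 '' {b' | hgt b' < m}) := by
  induction m using Nat.strong_induction_on with
  | _ m ih =>
  intro b hb
  obtain ⟨φ, h1, h2⟩ := S.cond b
  have hE : ∀ b' ∈ φ.support, EE qq a0 a1 a2 a3 b' ∈
      Submodule.span F (EE qq a0 a1 a2 a3 '' {b' | hgt b' < m}) := fun b' hb' =>
    Submodule.subset_span ⟨b', hb ▸ hgt_lt (h1 hb'), rfl⟩
  have hsE : ∀ b' ∈ φ.support, σ (EE qq a0 a1 a2 a3 b') ∈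
      Submodule.span F (EE qq a0 a1 a2 a3 '' {b' | hgt b' < m}) := fun b' hb' => by
    have hlt : hgt b' < m := hb ▸ hgt_lt (h1 hb')
    have h3 := ih _ hlt b' rfl
    have h4 := Submodule.span_mono (R := F) (Set.image_mono (f := EE qq a0 a1 a2 a3)
      (show {c : Idx | hgt c < hgt b'} ⊆ {c | hgt c < m} from fun c hc => lt_trans hc hlt)) h3
    have := add_mem h4 (Submodule.smul_mem _ (qq ^ (-Nnum b')) (hE b' hb'))
    rwa [sub_add_cancel] at this
  have e : EE qq a0 a1 a2 a3 b = B b - φ.sum fun b p =>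
      (qq * Polynomial.eval₂ (Int.castRingHom F) qq p) • EE qq a0 a1 a2 a3 b := by
    rw [← h2]; abel
  have e2 : σ (EE qq a0 a1 a2 a3 b) - qq ^ (-Nnum b) • EE qq a0 a1 a2 a3 b =
      qq ^ (-Nnum b) • (φ.sum fun b p =>
        (qq * Polynomial.eval₂ (Int.castRingHom F) qq p) • EE qq a0 a1 a2 a3 b) -
      σ (φ.sum fun b p =>
        (qq * Polynomial.eval₂ (Int.castRingHom F) qq p) • EE qq a0 a1 a2 a3 b) := by
    rw [e, S.sub, S.sig, smul_sub]; abel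
  rw [e2]
  apply sub_mem
  · exact Submodule.smul_mem _ _ (sum_mem fun b' hb' => Submodule.smul_mem _ _ (hE b' hb'))
  · have := map_sum S.sa (fun b' => (qq * Polynomial.eval₂ (Int.castRingHom F) qq (φ b')) •
      EE qq a0 a1 a2 a3 b') φ.support
    change σ _ = _ at this
    rw [Finsupp.sum, this]
    refine sum_mem fun b' hb' => ?_
    change σ _ ∈ _
    rw [S.sm]
    exact Submodule.smul_mem _ _ (hsE b' hb')

theorem Setup.uniq (S : Setup bar σ B a0 a1 a2 a3) {d w : ℕ} {x : R}
    (hx : x ∈ QLat qq a0 a1 a2 a3 1 d w)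
    (hs : σ x = qq ^ (-((d : ℤ) ^ 2 - 2 * w - d)) • x) : x = 0 := by
  obtain ⟨g, rfl, hg, hw⟩ := QLat_coord hx
  by_cases h0 : g = 0
  · rw [h0, map_zero]
  exfalso
  obtain ⟨b0, hb0, hmax⟩ := Finset.exists_max_image g.support hgt (Finsupp.support_nonempty_iff.2 h0)
  set N : ℤ := (d : ℤ) ^ 2 - 2 * w - d with hN
  have hNb : ∀ b, g b ≠ 0 → Nnum b = N := by
    intro b hb
    obtain ⟨h1, h2⟩ := hw b hb
    rw [hN, Nnum, ← h1, ← h2]; push_cast; ring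
  set V := Submodule.span F (EE qq a0 a1 a2 a3 '' {b' | hgt b' < hgt b0}) with hV
  have hT : ∀ b ∈ g.support, bar (g b) • (σ (EE qq a0 a1 a2 a3 b) - qq ^ (-N) • EE qq a0 a1 a2 a3 b) ∈ V := by
    intro b hb
    have h3 := S.tri _ b rfl
    rw [hNb b (Finsupp.mem_support_iff.1 hb)] at h3
    exact Submodule.smul_mem _ _ (Submodule.span_mono (R := F) (Set.image_mono
      (f := EE qq a0 a1 a2 a3) (show {c : Idx | hgt c < hgt b} ⊆ {c | hgt c < hgt b0} from
        fun c hc => lt_of_lt_of_le hc (hmax b hb))) h3)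
  have hsum := sum_mem hT
  set f : Idx →₀ F := Finsupp.mapRange (fun c => qq ^ (-N) * (c - bar c)) (by simp) g with hf
  have hlc : Finsupp.linearCombination F (EE qq a0 a1 a2 a3) f =
      ∑ b ∈ g.support, (qq ^ (-N) * (g b - bar (g b))) • EE qq a0 a1 a2 a3 b := by
    rw [Finsupp.linearCombination_apply, Finsupp.sum_of_support_subset f (s := g.support)
      (Finsupp.support_mapRange) _ (by simp)]
    simp [hf]
  have hσx : σ (Finsupp.linearCombination F (EE qq a0 a1 a2 a3) g) =
      ∑ b ∈ g.support, bar (g b) • σ (EE qq a0 a1 a2 a3 b) := by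
    have := map_sum S.sa (fun b' => g b' • EE qq a0 a1 a2 a3 b') g.support
    change σ _ = _ at this
    rw [Finsupp.linearCombination_apply, Finsupp.sum, this]
    exact Finset.sum_congr rfl fun b _ => S.sm _ _
  have key : Finsupp.linearCombination F (EE qq a0 a1 a2 a3) f ∈ V := by
    have : Finsupp.linearCombination F (EE qq a0 a1 a2 a3) f =
      ∑ b ∈ g.support, bar (g b) • (σ (EE qq a0 a1 a2 a3 b) - qq ^ (-N) • EE qq a0 a1 a2 a3 b) := by
      simp only [smul_sub, Finset.sum_sub_distrib]
      rw [← hσx, hs, hlc, Finsupp.linearCombination_apply, Finsupp.sum, Finset.smul_sum,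
        ← Finset.sum_sub_distrib]
      refine Finset.sum_congr rfl fun b _ => ?_
      rw [smul_smul, smul_smul, ← sub_smul]
      congr 1; ring
    rw [this]; exact hsum
  rw [hV, Finsupp.mem_span_image_iff_linearCombination] at key
  obtain ⟨f', hf', hff⟩ := key
  have heq : f' = f := S.liE hff
  have hz : f b0 = 0 := by
    by_contra hne
    rw [← heq] at hne
    have := hf' (Finsupp.mem_support_iff.2 hne)
    simp at this
  rw [hf, Finsupp.mapRange_apply] at hz
  have hz2 : bar (g b0) = g b0 := by
    rcases mul_eq_zero.1 hz with h | h
    · exact absurd h (zpow_ne_zero _ qq_ne)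
    · exact (sub_eq_zero.1 h).symm
  obtain ⟨p, hp⟩ := hg b0
  rw [hp] at hz2
  exact Finsupp.mem_support_iff.1 hb0 (hp.trans (bar_fixed S.hbar p hz2))

end Uniq

section GenId
variable {K R : Type*} [Field K] [Ring R] [Algebra K R] {q : K} {a0 a1 a2 a3 : R}
theorem QRel.gz (h : QRel q a0 a1 a2 a3) :
    a0 * (q ^ 6 • a3) - (q⁻¹) ^ 2 • ((q ^ 2 • a1) * (q ^ 4 • a2)) = q ^ 4 • ZZ q a0 a1 a2 a3 := by
  have hq := h.hq
  simp only [ZZ, smul_mul_assoc, mul_smul_comm, h.h03, h.h12, smul_sub, smul_add, smul_smul]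
  match_scalars <;> field_simp <;> ring
theorem QRel.g1 (h : QRel q a0 a1 a2 a3) :
    (q ^ 2 • a1) * (q ^ 6 • a3) - (q⁻¹) ^ 2 • ((q ^ 4 • a2) * (q ^ 4 • a2)) =
      q ^ 6 • P1 q a1 a2 a3 := by
  have hq := h.hq
  simp only [P1, smul_mul_assoc, mul_smul_comm, h.h13, smul_sub, smul_add, smul_smul]
  match_scalars <;> field_simp <;> ring
theorem QRel.g0 (h : QRel q a0 a1 a2 a3) :
    a0 * (q ^ 4 • a2) - (q⁻¹) ^ 2 • ((q ^ 2 • a1) * (q ^ 2 • a1)) = q ^ 2 • P0 q a0 a1 a2 := by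
  have hq := h.hq
  simp only [P0, smul_mul_assoc, mul_smul_comm, h.h02, smul_sub, smul_add, smul_smul]
  match_scalars <;> field_simp <;> ring
end GenId

section Fin
variable {R : Type*} [Ring R] [Algebra F R] {bar : F →+* F} {σ : R → R} {B : Idx → R}
    {a0 a1 a2 a3 : R}

theorem Setup.sq (S : Setup bar σ B a0 a1 a2 a3) (k : ℕ) (x : R) :
    σ (qq ^ k • x) = (qq⁻¹) ^ k • σ x := by rw [S.sm, map_pow, S.hbar]

theorem Setup.sz (S : Setup bar σ B a0 a1 a2 a3) (h : QRel qq a0 a1 a2 a3) :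
    σ (ZZ qq a0 a1 a2 a3) = qq ^ 4 • ZZ qq a0 a1 a2 a3 := by
  rw [ZZ, S.sub, S.sq, S.mul, S.mul, S.s0, S.s1, S.s2, S.s3]
  exact h.gz

theorem Setup.sp1 (S : Setup bar σ B a0 a1 a2 a3) (h : QRel qq a0 a1 a2 a3) :
    σ (P1 qq a1 a2 a3) = qq ^ 6 • P1 qq a1 a2 a3 := by
  rw [P1, S.sub, S.sq, S.mul, S.mul, S.s1, S.s2, S.s3]
  exact h.g1

theorem Setup.sp0 (S : Setup bar σ B a0 a1 a2 a3) (h : QRel qq a0 a1 a2 a3) :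
    σ (P0 qq a0 a1 a2) = qq ^ 2 • P0 qq a0 a1 a2 := by
  rw [P0, S.sub, S.sq, S.mul, S.mul, S.s0, S.s1, S.s2]
  exact h.g0

theorem Setup.sT (S : Setup bar σ B a0 a1 a2 a3) (h : QRel qq a0 a1 a2 a3) (n : ℕ) :
    σ (TT qq (ZZ qq a0 a1 a2 a3) (P0 qq a0 a1 a2 * P1 qq a1 a2 a3) a3 (P1 qq a1 a2 a3 * a2) n) =
      qq ^ (2 * n + 6) •
        TT qq (ZZ qq a0 a1 a2 a3) (P0 qq a0 a1 a2 * P1 qq a1 a2 a3) a3 (P1 qq a1 a2 a3 * a2) n := by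
  have hq := h.hq
  have r := h.rel2
  have sz := S.sz h
  have sp : σ (P0 qq a0 a1 a2 * P1 qq a1 a2 a3) = qq ^ 12 • (P0 qq a0 a1 a2 * P1 qq a1 a2 a3) := by
    rw [S.mul, S.sp1 h, S.sp0 h, smul_mul_assoc, mul_smul_comm, h.p1p0, smul_smul, smul_smul]
    congr 1; ring
  have sy : σ (P1 qq a1 a2 a3 * a2) = qq ^ 10 • (P1 qq a1 a2 a3 * a2) := by
    rw [S.mul, S.sp1 h, S.s2, smul_mul_assoc, mul_smul_comm, h.p1u2, smul_smul]
    congr 1; ring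
  generalize ZZ qq a0 a1 a2 a3 = z at *
  generalize P0 qq a0 a1 a2 * P1 qq a1 a2 a3 = p at *
  generalize P1 qq a1 a2 a3 * a2 = y at *
  induction n using Nat.twoStepInduction with
  | zero => rw [TT_zero, S.s3]
  | one =>
    rw [TT_one, S.sub, S.sq, S.mul, S.s3, sz, sy, ← TT_one qq z p, r.left0]
    simp only [smul_mul_assoc, mul_smul_comm, smul_sub, smul_smul]
    congr 2 <;> field_simp
  | more n ih1 ih2 =>
    have e := congrArg σ (TT_right qq z p a3 y r.zp n)
    rw [S.sub, S.sq, S.mul, S.mul, ih1, ih2, sz, sp] at e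
    rw [e, r.left_]
    simp only [smul_mul_assoc, mul_smul_comm, smul_sub, smul_smul, r.pT]
    congr 2
    · ring
    · field_simp; ring

theorem Setup.tau_eq (S : Setup bar σ B a0 a1 a2 a3) (h : QRel qq a0 a1 a2 a3) (n : ℕ) :
    B (n + 1, 0, 0, n) = tau qq a0 a1 a2 a3 n := by
  have hq := h.hq
  rw [← sub_eq_zero]
  refine S.uniq (d := 2 * n + 1) (w := 3 * n + 3) ?_ ?_
  · have := sub_mem (S.B_mem (n + 1) 0 0 n (2 * n + 1) (3 * n + 3) (by omega) (by omega))
      (main_lat h n).1.2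
    rwa [sub_sub_sub_cancel_right] at this
  · have hc : (2 * Nat.choose n 2 : ℤ) = n ^ 2 - n := by
      induction n with
      | zero => simp
      | succ n ih => rw [choose2]; push_cast; linarith
    have hN : -Nnum (n + 1, 0, 0, n) = -(((2 * n + 1 : ℕ) : ℤ) ^ 2 - 2 * ((3 * n + 3 : ℕ) : ℤ)
        - ((2 * n + 1 : ℕ) : ℤ)) := by
      simp only [Nnum]; push_cast; ring
    rw [S.sub, S.sig, hN, smul_sub]
    congr 1
    rw [tau, S.sq, S.sT h, smul_smul, smul_smul]
    congr 1
    rw [← zpow_natCast, ← zpow_natCast, ← zpow_natCast, inv_zpow', ← zpow_add₀ hq, ← zpow_add₀ hq]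
    congr 1
    push_cast
    linarith

end Fin

theorem tau_comm {K R : Type*} [Field K] [Ring R] [Algebra K R] {q : K} {a0 a1 a2 a3 : R}
    (h : QRel q a0 a1 a2 a3) (n : ℕ) :
    tau q a0 a1 a2 a3 n * tau q a0 a1 a2 a3 (n + 1) =
      q ^ 2 • (tau q a0 a1 a2 a3 (n + 1) * tau q a0 a1 a2 a3 n) := by
  simp only [tau, smul_mul_assoc, mul_smul_comm, h.rel2.comm, smul_smul]
  congr 1; ring

/-- For every integer `n ≥ 1` the quantized cluster variables q-commute:
`B[n,0,0,n−1]·B[n+1,0,0,n] = q² · B[n+1,0,0,n]·B[n,0,0,n−1]`. -/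
theorem stmt15 (bar : F →+* F) (σ : Sgen → Sgen) (B : Idx → Sgen)
    (hPBW : LinearIndependent F mon) (hσ : SigmaHyp bar σ) (hB : DCB bar σ B) (n : ℕ) (hn : 1 ≤ n) :
    Bz B ((n : ℤ), 0, 0, (n : ℤ) - 1) * Bz B ((n : ℤ) + 1, 0, 0, (n : ℤ))
        = qq ^ 2 • (Bz B ((n : ℤ) + 1, 0, 0, (n : ℤ)) * Bz B ((n : ℤ), 0, 0, (n : ℤ) - 1)) := by
  obtain ⟨m, rfl⟩ : ∃ m, n = m + 1 := ⟨n - 1, by omega⟩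
  have S := setup_of hPBW hσ hB
  have h : QRel qq us0 us1 us2 us3 := QRelS S.rel01 S.rel12 S.rel23
  have e1 : Bz B (((m + 1 : ℕ) : ℤ), 0, 0, ((m + 1 : ℕ) : ℤ) - 1) = tau qq us0 us1 us2 us3 m := by
    rw [← S.tau_eq h, Bz, if_pos (by simp only; omega)]
    congr 1
    simp only [Prod.mk.injEq]; omega
  have e2 : Bz B (((m + 1 : ℕ) : ℤ) + 1, 0, 0, ((m + 1 : ℕ) : ℤ)) =
      tau qq us0 us1 us2 us3 (m + 1) := by
    rw [← S.tau_eq h, Bz, if_pos (by simp only; omega)]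
    congr 1
  rw [e1, e2]
  exact tau_comm h m
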